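/- arXiv:1307.5613 — 8 statements merged into one kernel-verified Lean document; each statement's English description precedes it below -/
import Mathlib

section
/- Every rate vector in the linearized rate region belongs to the conditional-probability rate region: R̂_0 ⊆ R_0. (Converse direction of Proposition 1, including the degenerate cases where the total busy mass Σ_{s,i} q(b,s,i) or the total idle mass Σ_{s,i} q(e,s,i) is zero.) -/
open Finset

/-- Conditional-probability rate region `R_0`. -/
def condRegion {S : Type*} [Fintype S] (I : S → ℕ)
    (P rs rp : (s : S) → Fin (I s + 1) → ℝ)
    (Phat : S → ℝ) (lam : ℝ) : Set (S → ℝ) :=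
  {rbar | ∃ (qb qe : ℝ) (qB qE : (s : S) → Fin (I s + 1) → ℝ),
    0 ≤ qb ∧ 0 ≤ qe ∧ qb + qe = 1 ∧
    (∀ s i, 0 ≤ qB s i) ∧ (∀ s i, 0 ≤ qE s i) ∧
    (∑ s, ∑ i, qB s i) = 1 ∧ (∑ s, ∑ i, qE s i) = 1 ∧
    qb * (∑ s, ∑ i, rp s i * qB s i) = lam ∧
    (∀ s, qe * (∑ i, P s i * qE s i) + qb * (∑ i, P s i * qB s i) ≤ Phat s) ∧
    (∀ s, rbar s = qe * ∑ i, rs s i * qE s i)}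

/-- Linearized rate region `R̂_0`. -/
def linRegion {S : Type*} [Fintype S] (I : S → ℕ)
    (P rs rp : (s : S) → Fin (I s + 1) → ℝ)
    (Phat : S → ℝ) (lam : ℝ) : Set (S → ℝ) :=
  {rbar | ∃ qB qE : (s : S) → Fin (I s + 1) → ℝ,
    (∀ s i, 0 ≤ qB s i) ∧ (∀ s i, 0 ≤ qE s i) ∧
    (∑ s, ∑ i, rp s i * qB s i) = lam ∧
    (∀ s, (∑ i, P s i * qE s i) + (∑ i, P s i * qB s i) ≤ Phat s) ∧
    ((∑ s, ∑ i, qE s i) + (∑ s, ∑ i, qB s i)) = 1 ∧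
    (∀ s, rbar s = ∑ i, rs s i * qE s i)}

/-- Normalization: any nonnegative mass function is its total mass times a probability. -/
theorem exists_normalized {S : Type*} [Fintype S] [Nonempty S] (I : S → ℕ)
    (q : (s : S) → Fin (I s + 1) → ℝ) (hq : ∀ s i, 0 ≤ q s i) :
    ∃ p : (s : S) → Fin (I s + 1) → ℝ, (∀ s i, 0 ≤ p s i) ∧ (∑ s, ∑ i, p s i) = 1 ∧
      ∀ s i, (∑ s, ∑ i, q s i) * p s i = q s i := by
  classical
  by_cases hT : (∑ s, ∑ i, q s i) = 0
  · obtain ⟨s0⟩ := ‹Nonempty S›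
    refine ⟨fun s i => if s = s0 then (if i = 0 then 1 else 0) else 0, ?_, ?_, ?_⟩
    · intro s i
      dsimp only
      split_ifs <;> norm_num
    · rw [Finset.sum_eq_single s0]
      · simp
      · intro s _ hs
        simp [hs]
      · simp
    · intro s i
      have h1 := (Finset.sum_eq_zero_iff_of_nonneg
        (fun s _ => Finset.sum_nonneg (fun i _ => hq s i))).1 hT s (Finset.mem_univ s)
      have h2 := (Finset.sum_eq_zero_iff_of_nonneg
        (fun i _ => hq s i)).1 h1 i (Finset.mem_univ i)
      rw [hT, h2, zero_mul]
  · refine ⟨fun s i => q s i / (∑ s, ∑ i, q s i), ?_, ?_, ?_⟩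
    · intro s i
      exact div_nonneg (hq s i)
        (Finset.sum_nonneg fun s _ => Finset.sum_nonneg fun i _ => hq s i)
    · simp only [← Finset.sum_div]
      exact div_self hT
    · intro s i
      exact mul_div_cancel₀ _ hT

/-- **Converse direction of Proposition 1.** Every rate vector in the linearized
rate region belongs to the conditional-probability rate region: `R̂_0 ⊆ R_0`. -/
theorem lin_region_subset_cond_region
    {S : Type*} [Fintype S] [Nonempty S]
    (I : S → ℕ) (hI : ∀ s, 1 ≤ I s)
    (P rs rp : (s : S) → Fin (I s + 1) → ℝ) (rp0 : ℝ)
    (Phat : S → ℝ) (lam : ℝ)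
    (hP0 : ∀ s, P s 0 = 0) (hPnn : ∀ s i, 0 ≤ P s i)
    (hrs0 : ∀ s, rs s 0 = 0) (hrs : ∀ s i, rs s i ∈ Set.Icc (0:ℝ) 1)
    (hrp : ∀ s i, rp s i ∈ Set.Icc (0:ℝ) 1) (hrp00 : ∀ s, rp s 0 = rp0)
    (hrp0 : rp0 ∈ Set.Icc (0:ℝ) 1)
    (hPhat : ∀ s, 0 ≤ Phat s) (hlam : 0 ≤ lam) :
    linRegion I P rs rp Phat lam ⊆ condRegion I P rs rp Phat lam := by
  rintro rbar ⟨qB, qE, hB, hE, hl, hP, h1, hr⟩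
  obtain ⟨pB, hpB, hpB1, hpBq⟩ := exists_normalized I qB hB
  obtain ⟨pE, hpE, hpE1, hpEq⟩ := exists_normalized I qE hE
  have key : ∀ (T : ℝ) (p q f : (s : S) → Fin (I s + 1) → ℝ), (∀ s i, T * p s i = q s i) →
      ∀ s, T * ∑ i, f s i * p s i = ∑ i, f s i * q s i := by
    intro T p q f h s
    rw [Finset.mul_sum]
    refine Finset.sum_congr rfl fun i _ => ?_
    rw [← h s i]
    ring
  refine ⟨∑ s, ∑ i, qB s i, ∑ s, ∑ i, qE s i, pB, pE,
    Finset.sum_nonneg fun s _ => Finset.sum_nonneg fun i _ => hB s i,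
    Finset.sum_nonneg fun s _ => Finset.sum_nonneg fun i _ => hE s i,
    by rw [add_comm]; exact h1, hpB, hpE, hpB1, hpE1, ?_, ?_, ?_⟩
  · rw [Finset.mul_sum, ← hl]
    exact Finset.sum_congr rfl fun s _ => key _ pB qB rp hpBq s
  · intro s
    rw [key _ pE qE P hpEq s, key _ pB qB P hpBq s]
    exact hP s
  · intro s
    rw [key _ pE qE rs hpEq s]
    exact hr s
end

section
/- The stability region of the PU queue under the class of stationary sensing-based policies is the interval [0, λ̂]: the linearized rate region R̂_0 is nonempty if and only if 0 ≤ λ_p ≤ λ̂. (Corollary 1) -/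
open Finset

/-- Optimal value `λ̂` of the stability-region linear program. -/
noncomputable def lamHat {S : Type*} [Fintype S] (I : S → ℕ)
    (P rp : (s : S) → Fin (I s + 1) → ℝ) (Phat : S → ℝ) : ℝ :=
  sSup {v | ∃ x : (s : S) → Fin (I s + 1) → ℝ,
    (∀ s i, 0 ≤ x s i) ∧ (∀ s, (∑ i, P s i * x s i) ≤ Phat s) ∧
    (∑ s, ∑ i, x s i) ≤ 1 ∧ v = ∑ s, ∑ i, rp s i * x s i}

/-- **Corollary 1.** The stability region of the PU queue under the class of
stationary sensing-based policies is the interval `[0, λ̂]`: the linearized rate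
region `R̂_0` is nonempty if and only if `0 ≤ λ_p ≤ λ̂`. -/
theorem lin_region_nonempty_iff
    {S : Type*} [Fintype S] [Nonempty S]
    (I : S → ℕ) (hI : ∀ s, 1 ≤ I s)
    (P rs rp : (s : S) → Fin (I s + 1) → ℝ) (rp0 : ℝ)
    (Phat : S → ℝ) (lam : ℝ)
    (hP0 : ∀ s, P s 0 = 0) (hPnn : ∀ s i, 0 ≤ P s i)
    (hrs0 : ∀ s, rs s 0 = 0) (hrs : ∀ s i, rs s i ∈ Set.Icc (0:ℝ) 1)
    (hrp : ∀ s i, rp s i ∈ Set.Icc (0:ℝ) 1) (hrp00 : ∀ s, rp s 0 = rp0)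
    (hrp0 : rp0 ∈ Set.Icc (0:ℝ) 1)
    (hPhat : ∀ s, 0 ≤ Phat s) :
    (linRegion I P rs rp Phat lam).Nonempty ↔ (0 ≤ lam ∧ lam ≤ lamHat I P rp Phat) := by
  classical
  set K : Set ((s : S) → Fin (I s + 1) → ℝ) := {x | (∀ s i, 0 ≤ x s i) ∧
    (∀ s, (∑ i, P s i * x s i) ≤ Phat s) ∧ (∑ s, ∑ i, x s i) ≤ 1} with hK
  have hle1 : ∀ x ∈ K, ∀ s i, x s i ≤ 1 := by
    rintro x ⟨h0, -, h1⟩ s i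
    calc x s i ≤ ∑ i, x s i := Finset.single_le_sum (fun j _ => h0 s j) (Finset.mem_univ i)
      _ ≤ ∑ s, ∑ i, x s i := Finset.single_le_sum (f := fun s => ∑ i, x s i)
          (fun t _ => Finset.sum_nonneg fun j _ => h0 t j) (Finset.mem_univ s)
      _ ≤ 1 := h1
  have hclosed : IsClosed K := by
    have e : K = (⋂ s, ⋂ i, {x : (s : S) → Fin (I s + 1) → ℝ | 0 ≤ x s i}) ∩
        ((⋂ s, {x : (s : S) → Fin (I s + 1) → ℝ | (∑ i, P s i * x s i) ≤ Phat s}) ∩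
        {x : (s : S) → Fin (I s + 1) → ℝ | (∑ s, ∑ i, x s i) ≤ 1}) := by
      ext x
      simp [hK]
    rw [e]
    refine IsClosed.inter (isClosed_iInter fun s => isClosed_iInter fun i =>
      isClosed_le (by fun_prop) (by fun_prop)) (IsClosed.inter (isClosed_iInter fun s =>
      isClosed_le (by fun_prop) (by fun_prop)) (isClosed_le (by fun_prop) (by fun_prop)))
  have hcomp : IsCompact K := by
    refine IsCompact.of_isClosed_subset (isCompact_univ_pi fun s =>
      isCompact_univ_pi fun i => isCompact_Icc (a := (0:ℝ)) (b := 1)) hclosed ?_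
    intro x hx s _ i _
    exact ⟨hx.1 s i, hle1 x hx s i⟩
  have hne : K.Nonempty := ⟨fun _ _ => 0, by simp, by simpa using hPhat, by simp⟩
  have hcont : ContinuousOn
      (fun x : (s : S) → Fin (I s + 1) → ℝ => ∑ s, ∑ i, rp s i * x s i) K := by fun_prop
  obtain ⟨x, hxK, hmax⟩ := hcomp.exists_isMaxOn hne hcont
  have hhat : lamHat I P rp Phat = ∑ s, ∑ i, rp s i * x s i := by
    refine IsGreatest.csSup_eq ⟨⟨x, hxK.1, hxK.2.1, hxK.2.2, rfl⟩, ?_⟩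
    rintro v ⟨y, h0, h1, h2, rfl⟩
    exact hmax (show y ∈ K from ⟨h0, h1, h2⟩)
  rw [hhat]
  constructor
  · rintro ⟨r, qB, qE, hB, hE, hl, hp, hs, -⟩
    have hl0 : 0 ≤ lam := by
      rw [← hl]
      exact Finset.sum_nonneg fun s _ => Finset.sum_nonneg fun i _ =>
        mul_nonneg (hrp s i).1 (hB s i)
    refine ⟨hl0, ?_⟩
    rw [← hl]
    refine hmax (show qB ∈ K from ⟨hB, fun s => ?_, ?_⟩)
    · have := Finset.sum_nonneg fun i (_ : i ∈ Finset.univ) => mul_nonneg (hPnn s i) (hE s i)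
      linarith [hp s]
    · have : 0 ≤ ∑ s, ∑ i, qE s i :=
        Finset.sum_nonneg fun s _ => Finset.sum_nonneg fun i _ => hE s i
      linarith
  · rintro ⟨h0, h1⟩
    obtain ⟨hx0, hxP, hx1⟩ := hxK
    set L := ∑ s, ∑ i, rp s i * x s i with hL
    have hL0 : 0 ≤ L := h0.trans h1
    obtain ⟨t, ht0, ht1, htL⟩ : ∃ t : ℝ, 0 ≤ t ∧ t ≤ 1 ∧ t * L = lam := by
      rcases hL0.eq_or_lt with h | h
      · exact ⟨0, le_rfl, zero_le_one, by linarith⟩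
      · exact ⟨lam / L, by positivity, (div_le_one h).2 h1, by field_simp⟩
    have hX0 : 0 ≤ ∑ s, ∑ i, x s i :=
      Finset.sum_nonneg fun s _ => Finset.sum_nonneg fun i _ => hx0 s i
    set X := ∑ s, ∑ i, x s i with hX
    have hc : 0 ≤ 1 - t * X := by nlinarith
    have hcard : (Fintype.card S : ℝ) ≠ 0 := by simp
    refine ⟨_, fun s i => t * x s i,
      fun s i => if i = 0 then (1 - t * X) / (Fintype.card S : ℝ) else 0,
      fun s i => mul_nonneg ht0 (hx0 s i), fun s i => ?_, ?_, fun s => ?_, ?_, fun s => rfl⟩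
    · dsimp only
      split_ifs <;> positivity
    · rw [← htL, hL, Finset.mul_sum]
      refine Finset.sum_congr rfl fun s _ => ?_
      rw [Finset.mul_sum]
      exact Finset.sum_congr rfl fun i _ => by ring
    · have e1 : ∑ i, P s i * (t * x s i) = t * ∑ i, P s i * x s i := by
        rw [Finset.mul_sum]
        exact Finset.sum_congr rfl fun i _ => by ring
      have e2 : 0 ≤ ∑ i, P s i * x s i :=
        Finset.sum_nonneg fun i _ => mul_nonneg (hPnn s i) (hx0 s i)
      rw [e1]
      simp only [mul_ite, mul_zero, Finset.sum_ite_eq', Finset.mem_univ, if_true, hP0, zero_mul]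
      nlinarith [hxP s]
    · have e1 : ∑ s, ∑ i, t * x s i = t * X := by
        simp only [hX, Finset.mul_sum]
      rw [e1]
      simp only [Finset.sum_ite_eq', Finset.mem_univ, if_true, Finset.sum_const,
        Finset.card_univ, nsmul_eq_mul]
      field_simp
      ring
end

section
/- If 0 ≤ λ_p ≤ λ̂, then the linearized rate region R̂_0 is nonempty: scaling an optimal LP solution x̂ by the factor λ_p/λ̂ (placing the remaining probability mass on idle-slot zero-power controls q(e,s,0)) produces a feasible point. (Converse direction of Corollary 1.) -/
open Finset

/-- **Converse direction of Corollary 1.** If `0 ≤ λ_p ≤ λ̂`, then the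
linearized rate region `R̂_0` is nonempty. -/
theorem lin_region_nonempty_of_le_lamHat
    {S : Type*} [Fintype S] [Nonempty S]
    (I : S → ℕ) (hI : ∀ s, 1 ≤ I s)
    (P rs rp : (s : S) → Fin (I s + 1) → ℝ) (rp0 : ℝ)
    (Phat : S → ℝ) (lam : ℝ)
    (hP0 : ∀ s, P s 0 = 0) (hPnn : ∀ s i, 0 ≤ P s i)
    (hrs0 : ∀ s, rs s 0 = 0) (hrs : ∀ s i, rs s i ∈ Set.Icc (0:ℝ) 1)
    (hrp : ∀ s i, rp s i ∈ Set.Icc (0:ℝ) 1) (hrp00 : ∀ s, rp s 0 = rp0)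
    (hrp0 : rp0 ∈ Set.Icc (0:ℝ) 1)
    (hPhat : ∀ s, 0 ≤ Phat s) (hlam : 0 ≤ lam)
    (hle : lam ≤ lamHat I P rp Phat) :
    (linRegion I P rs rp Phat lam).Nonempty := by
  obtain ⟨x, hx0, hxP, hx1, hxv⟩ : ∃ x : (s : S) → Fin (I s + 1) → ℝ,
      (∀ s i, 0 ≤ x s i) ∧ (∀ s, (∑ i, P s i * x s i) ≤ Phat s) ∧
      (∑ s, ∑ i, x s i) ≤ 1 ∧ lam ≤ ∑ s, ∑ i, rp s i * x s i := by
    let F : Set ((s : S) → Fin (I s + 1) → ℝ) := {x | (∀ s i, 0 ≤ x s i) ∧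
      (∀ s, (∑ i, P s i * x s i) ≤ Phat s) ∧ (∑ s, ∑ i, x s i) ≤ 1}
    have hclosed : IsClosed F := by
      refine IsClosed.and ?_ (IsClosed.and ?_ ?_)
      · simp only [Set.setOf_forall]
        exact isClosed_iInter fun s => isClosed_iInter fun i =>
          isClosed_le (by fun_prop) (by fun_prop)
      · simp only [Set.setOf_forall]
        exact isClosed_iInter fun s => isClosed_le (by fun_prop) (by fun_prop)
      · exact isClosed_le (by fun_prop) (by fun_prop)
    have hsub : F ⊆ Set.Icc 0 1 := by
      rintro x ⟨h0, -, h1⟩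
      refine ⟨fun s i => h0 s i, fun s i => ?_⟩
      have a := Finset.single_le_sum (f := fun i => x s i) (fun i _ => h0 s i) (Finset.mem_univ i)
      have b := Finset.single_le_sum (f := fun s => ∑ i, x s i)
        (fun s _ => Finset.sum_nonneg fun i _ => h0 s i) (Finset.mem_univ s)
      exact a.trans (b.trans h1)
    have hcomp : IsCompact F := isCompact_Icc.of_isClosed_subset hclosed hsub
    have hne : F.Nonempty := ⟨0, by simp [F, hPhat]⟩
    obtain ⟨x, hx, hmax⟩ := hcomp.exists_isMaxOn hne
      (f := fun x => ∑ s, ∑ i, rp s i * x s i) (by fun_prop)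
    refine ⟨x, hx.1, hx.2.1, hx.2.2, hle.trans ?_⟩
    refine csSup_le ⟨_, x, hx.1, hx.2.1, hx.2.2, rfl⟩ ?_
    rintro v ⟨y, h1, h2, h3, rfl⟩
    exact hmax (show y ∈ F from ⟨h1, h2, h3⟩)
  set v := ∑ s, ∑ i, rp s i * x s i with hv
  obtain ⟨c, hc0, hc1, hcv⟩ : ∃ c : ℝ, 0 ≤ c ∧ c ≤ 1 ∧ c * v = lam := by
    rcases (hlam.trans hxv).eq_or_lt with h | h
    · exact ⟨0, le_rfl, zero_le_one, by linarith⟩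
    · exact ⟨lam / v, by positivity, (div_le_one h).2 hxv, by field_simp⟩
  have hT0 : 0 ≤ ∑ s, ∑ i, x s i :=
    Finset.sum_nonneg fun s _ => Finset.sum_nonneg fun i _ => hx0 s i
  set T := ∑ s, ∑ i, x s i with hT
  have hcT : c * T ≤ 1 := by nlinarith
  have hcard : (0 : ℝ) < Fintype.card S := by exact_mod_cast Fintype.card_pos
  refine ⟨_, fun s i => c * x s i,
    fun s i => if i = 0 then (1 - c * T) / Fintype.card S else 0,
    fun s i => mul_nonneg hc0 (hx0 s i), ?_, ?_, ?_, ?_, fun s => rfl⟩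
  · intro s i
    dsimp only
    split_ifs
    · exact div_nonneg (by linarith) hcard.le
    · exact le_rfl
  · rw [← hcv, hv]
    simp only [Finset.mul_sum, mul_left_comm]
  · intro s
    have e : ∑ i, P s i * (c * x s i) = c * ∑ i, P s i * x s i := by
      simp only [Finset.mul_sum, mul_left_comm]
    have h0 : 0 ≤ ∑ i, P s i * x s i :=
      Finset.sum_nonneg fun i _ => mul_nonneg (hPnn s i) (hx0 s i)
    have := hxP s
    simp only [e, mul_ite, mul_zero, Finset.sum_ite_eq', Finset.mem_univ, if_true, hP0, zero_mul]
    nlinarith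
  · simp only [← Finset.mul_sum, Finset.sum_ite_eq', Finset.mem_univ, if_true, Finset.sum_const,
      Finset.card_univ, nsmul_eq_mul, ← hT]
    field_simp
    ring
end

section
/- The rate region achievable without the PU priority constraint is contained in the linearized rate region of sensing-based stationary policies: R_2 ⊆ R̂_0. (Theorem 1) -/
open Finset

/-- Unconstrained-priority rate region `R_2`. -/
def priorityFreeRegion {S : Type*} [Fintype S] (I : S → ℕ)
    (P rs rp : (s : S) → Fin (I s + 1) → ℝ)
    (Phat : S → ℝ) (lam : ℝ) : Set (S → ℝ) :=
  {rbar | ∃ p0 p1 : (s : S) → Fin (I s + 1) → ℝ,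
    (∀ s i, 0 ≤ p0 s i) ∧ (∀ s i, 0 ≤ p1 s i) ∧
    ((∑ s, ∑ i, p0 s i) + (∑ s, ∑ i, p1 s i)) = 1 ∧
    lam ≤ (∑ s, ∑ i, rp s i * p1 s i) ∧
    (∀ s, (∑ i, P s i * p0 s i) + (∑ i, P s i * p1 s i) ≤ Phat s) ∧
    (∀ s, rbar s = ∑ i, rs s i * p0 s i)}

/-- **Theorem 1.** The rate region achievable without the PU priority constraint
is contained in the linearized rate region of sensing-based stationary policies:
`R_2 ⊆ R̂_0`. -/
theorem priorityFree_subset_lin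
    {S : Type*} [Fintype S] [Nonempty S]
    (I : S → ℕ) (hI : ∀ s, 1 ≤ I s)
    (P rs rp : (s : S) → Fin (I s + 1) → ℝ) (rp0 : ℝ)
    (Phat : S → ℝ) (lam : ℝ)
    (hP0 : ∀ s, P s 0 = 0) (hPnn : ∀ s i, 0 ≤ P s i)
    (hrs0 : ∀ s, rs s 0 = 0) (hrs : ∀ s i, rs s i ∈ Set.Icc (0:ℝ) 1)
    (hrp : ∀ s i, rp s i ∈ Set.Icc (0:ℝ) 1) (hrp00 : ∀ s, rp s 0 = rp0)
    (hrp0 : rp0 ∈ Set.Icc (0:ℝ) 1)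
    (hPhat : ∀ s, 0 ≤ Phat s) (hlam : 0 ≤ lam) :
    priorityFreeRegion I P rs rp Phat lam ⊆ linRegion I P rs rp Phat lam := by
  rintro rbar ⟨p0, p1, h0, h1, hsum, hl, hpow, hr⟩
  set T := ∑ s, ∑ i, rp s i * p1 s i with hT
  obtain ⟨θ, hθ0, hθ1, hθT⟩ : ∃ θ : ℝ, 0 ≤ θ ∧ θ ≤ 1 ∧ θ * T = lam := by
    rcases (hlam.trans hl).eq_or_lt with h | h
    · exact ⟨0, le_rfl, zero_le_one, by linarith⟩
    · exact ⟨lam / T, by positivity, (div_le_one h).2 hl, div_mul_cancel₀ _ h.ne'⟩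
  have key : ∀ (s : S) (f : Fin (I s + 1) → ℝ),
      ∑ i, f i * (p0 s i + if i = 0 then (1 - θ) * ∑ j, p1 s j else 0)
        = ∑ i, f i * p0 s i + f 0 * ((1 - θ) * ∑ j, p1 s j) := by
    intro s f
    simp [mul_add, Finset.sum_add_distrib]
  have hB : ∀ (s : S) (f : Fin (I s + 1) → ℝ),
      ∑ i, f i * (θ * p1 s i) = θ * ∑ i, f i * p1 s i := by
    intro s f
    rw [Finset.mul_sum]
    exact Finset.sum_congr rfl fun i _ => by ring
  refine ⟨fun s i => θ * p1 s i,
    fun s i => p0 s i + if i = 0 then (1 - θ) * ∑ j, p1 s j else 0,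
    fun s i => mul_nonneg hθ0 (h1 s i), ?_, ?_, ?_, ?_, ?_⟩
  · intro s i
    have h2 : 0 ≤ (1 - θ) * ∑ j, p1 s j :=
      mul_nonneg (by linarith) (Finset.sum_nonneg fun j _ => h1 s j)
    have h3 := h0 s i
    dsimp only
    split_ifs <;> linarith
  · simp only [hB]
    rw [← Finset.mul_sum, hθT]
  · intro s
    simp only [hB, key, hP0]
    have h2 : 0 ≤ ∑ i, P s i * p1 s i :=
      Finset.sum_nonneg fun i _ => mul_nonneg (hPnn s i) (h1 s i)
    have h3 := hpow s
    nlinarith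
  · have e1 := fun s => key s (fun _ => 1)
    have e2 := fun s => hB s (fun _ => 1)
    simp only [one_mul] at e1 e2
    simp only [e1, e2]
    rw [Finset.sum_add_distrib, ← Finset.mul_sum, ← Finset.mul_sum]
    linarith
  · intro s
    simp only [key, hrs0, hr s]
    ring
end

section
/- The three rate regions coincide: R̂_0 = R_2 (and hence, combined with Proposition 1, R_0 = R_2), i.e., policies that base decisions only on whether the PU queue is empty or busy and always give priority to PU traffic achieve exactly the same set of SU rate vectors as policies allowed to violate the PU priority constraint. -/
open Finset

/-- The rate regions coincide: `R̂_0 = R_2`. Policies basing decisions only on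
whether the PU queue is empty or busy and always giving priority to PU traffic
achieve exactly the same set of SU rate vectors as policies allowed to violate
the PU priority constraint. -/
theorem lin_region_eq_priorityFree
    {S : Type*} [Fintype S] [Nonempty S]
    (I : S → ℕ) (hI : ∀ s, 1 ≤ I s)
    (P rs rp : (s : S) → Fin (I s + 1) → ℝ) (rp0 : ℝ)
    (Phat : S → ℝ) (lam : ℝ)
    (hP0 : ∀ s, P s 0 = 0) (hPnn : ∀ s i, 0 ≤ P s i)
    (hrs0 : ∀ s, rs s 0 = 0) (hrs : ∀ s i, rs s i ∈ Set.Icc (0:ℝ) 1)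
    (hrp : ∀ s i, rp s i ∈ Set.Icc (0:ℝ) 1) (hrp00 : ∀ s, rp s 0 = rp0)
    (hrp0 : rp0 ∈ Set.Icc (0:ℝ) 1)
    (hPhat : ∀ s, 0 ≤ Phat s) (hlam : 0 ≤ lam) :
    linRegion I P rs rp Phat lam = priorityFreeRegion I P rs rp Phat lam := by
  classical
  ext rbar
  constructor
  · rintro ⟨qB, qE, hB, hE, h1, h2, h3, h4⟩
    exact ⟨qE, qB, hE, hB, h3, h1.ge, h2, h4⟩
  · rintro ⟨p0, p1, h0, h1, hs, hl, hp, hr⟩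
    obtain ⟨θ, hθ0, hθ1, hθ⟩ : ∃ θ : ℝ, 0 ≤ θ ∧ θ ≤ 1 ∧
        θ * (∑ s, ∑ i, rp s i * p1 s i) = lam := by
      rcases eq_or_lt_of_le (hlam.trans hl) with h | h
      · exact ⟨0, le_rfl, zero_le_one, by linarith⟩
      · exact ⟨lam / (∑ s, ∑ i, rp s i * p1 s i), div_nonneg hlam h.le,
          (div_le_one h).2 hl, div_mul_cancel₀ _ h.ne'⟩
    have key : ∀ (f : (s : S) → Fin (I s + 1) → ℝ) (s : S),
        (∑ i, f s i * (p0 s i + if i = 0 then (1 - θ) * ∑ j, p1 s j else 0))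
          = (∑ i, f s i * p0 s i) + f s 0 * ((1 - θ) * ∑ j, p1 s j) := by
      intro f s
      simp [mul_add, Finset.sum_add_distrib]
    have keyB : ∀ (f : (s : S) → Fin (I s + 1) → ℝ) (s : S),
        (∑ i, f s i * (θ * p1 s i)) = θ * ∑ i, f s i * p1 s i := by
      intro f s
      rw [Finset.mul_sum]
      exact Finset.sum_congr rfl fun i _ => by ring
    refine ⟨fun s i => θ * p1 s i,
      fun s i => p0 s i + if i = 0 then (1 - θ) * ∑ j, p1 s j else 0,
      fun s i => mul_nonneg hθ0 (h1 s i), fun s i => ?_, ?_, fun s => ?_, ?_, fun s => ?_⟩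
    · refine add_nonneg (h0 s i) ?_
      split_ifs
      · exact mul_nonneg (by linarith) (Finset.sum_nonneg fun j _ => h1 s j)
      · exact le_rfl
    · simp only [keyB]
      rw [← Finset.mul_sum, hθ]
    · rw [key P, keyB P, hP0]
      have hn : 0 ≤ ∑ i, P s i * p1 s i :=
        Finset.sum_nonneg fun i _ => mul_nonneg (hPnn s i) (h1 s i)
      have := hp s
      nlinarith
    · have e1 := fun s => key (fun _ _ => 1) s
      simp only [one_mul] at e1
      simp only [e1, Finset.sum_add_distrib, ← Finset.mul_sum]
      linarith
    · rw [key rs, hrs0, hr s]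
      ring
end

section
/- (Proposition 2, necessity.) Under imperfect sensing, suppose q_b, q_e ≥ 0 with q_b + q_e = 1 and nonnegative conditional probabilities q(s,i|b), q(s,i|e) with Σ_{s,i} q(s,i|b) = 1 and Σ_{s,i} q(s,i|e) = 1 satisfy the rate-balance equation q_b 𝒫_D Σ_{s,i} r_p(s,i) q(s,i|b) + q_b (1−𝒫_D) r_p0 Σ_s q(s,0|e) = λ_p. Then λ_p / (𝒫_D r_{p,max} + (1−𝒫_D) r_p0) ≤ q_b ≤ min{ λ_p / (𝒫_D r_p0), 1 }, where r_{p,max} = max_{s,i} r_p(s,i). -/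
open Finset

/-- **Proposition 2, necessity.** Under imperfect sensing, any stationary policy
whose conditional probabilities satisfy the rate-balance equation forces the
busy probability `q_b` to lie in the stated interval. -/
theorem imperfect_sensing_qb_bounds
    {S : Type*} [Fintype S] [Nonempty S]
    (I : S → ℕ) (hI : ∀ s, 1 ≤ I s)
    (rp : (s : S) → Fin (I s + 1) → ℝ) (rp0 : ℝ)
    (hrp : ∀ s i, rp s i ∈ Set.Icc (0:ℝ) 1) (hrp00 : ∀ s, rp s 0 = rp0)
    (hrp0pos : 0 < rp0) (hrp0le : rp0 ≤ 1)
    (hmono : ∀ s, Monotone (rp s))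
    (lam : ℝ) (hlam : 0 ≤ lam)
    (PD : ℝ) (hPDpos : 0 < PD) (hPDle : PD ≤ 1)
    (rpmax : ℝ) (hrpmax : IsGreatest {v | ∃ s i, v = rp s i} rpmax)
    (qb qe : ℝ) (qB qE : (s : S) → Fin (I s + 1) → ℝ)
    (hqb : 0 ≤ qb) (hqe : 0 ≤ qe) (hbe : qb + qe = 1)
    (hqBnn : ∀ s i, 0 ≤ qB s i) (hqEnn : ∀ s i, 0 ≤ qE s i)
    (hqB1 : (∑ s, ∑ i, qB s i) = 1) (hqE1 : (∑ s, ∑ i, qE s i) = 1)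
    (hbal : qb * PD * (∑ s, ∑ i, rp s i * qB s i)
      + qb * (1 - PD) * rp0 * (∑ s, qE s 0) = lam) :
    lam / (PD * rpmax + (1 - PD) * rp0) ≤ qb ∧ qb ≤ min (lam / (PD * rp0)) 1 := by
  have hge : ∀ s i, rp0 ≤ rp s i := fun s i => by
    rw [← hrp00 s]; exact hmono s (Fin.zero_le i)
  have hle : ∀ s i, rp s i ≤ rpmax := fun s i => hrpmax.2 ⟨s, i, rfl⟩
  have h1 : (∑ s, ∑ i, rp s i * qB s i) ≤ rpmax := by
    calc (∑ s, ∑ i, rp s i * qB s i) ≤ ∑ s, ∑ i, rpmax * qB s i :=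
          Finset.sum_le_sum fun s _ => Finset.sum_le_sum fun i _ =>
            mul_le_mul_of_nonneg_right (hle s i) (hqBnn s i)
      _ = rpmax := by simp only [← Finset.mul_sum, hqB1, mul_one]
  have h2 : rp0 ≤ (∑ s, ∑ i, rp s i * qB s i) := by
    calc rp0 = ∑ s, ∑ i, rp0 * qB s i := by simp only [← Finset.mul_sum, hqB1, mul_one]
      _ ≤ _ := Finset.sum_le_sum fun s _ => Finset.sum_le_sum fun i _ =>
            mul_le_mul_of_nonneg_right (hge s i) (hqBnn s i)
  have h3 : (∑ s, qE s 0) ≤ 1 := by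
    rw [← hqE1]
    exact Finset.sum_le_sum fun s _ =>
      Finset.single_le_sum (f := fun i => qE s i) (fun i _ => hqEnn s i) (Finset.mem_univ 0)
  have h4 : 0 ≤ (∑ s, qE s 0) := Finset.sum_nonneg fun s _ => hqEnn s 0
  have hc : 0 ≤ qb * (1 - PD) * rp0 :=
    mul_nonneg (mul_nonneg hqb (by linarith)) hrp0pos.le
  have hd : 0 ≤ qb * PD := mul_nonneg hqb hPDpos.le
  have hmax : 0 < rpmax := by linarith
  have hden : 0 < PD * rpmax + (1 - PD) * rp0 :=
    add_pos_of_pos_of_nonneg (mul_pos hPDpos hmax) (mul_nonneg (by linarith) hrp0pos.le)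
  have a1 := mul_le_mul_of_nonneg_left h1 hd
  have a2 := mul_le_mul_of_nonneg_left h2 hd
  have a3 := mul_le_mul_of_nonneg_left h3 hc
  have a4 := mul_nonneg hc h4
  refine ⟨?_, le_min ?_ (by linarith)⟩
  · rw [div_le_iff₀ hden]
    linarith
  · rw [le_div_iff₀ (mul_pos hPDpos hrp0pos)]
    linarith
end

section
/- (Proposition 2, sufficiency.) Under imperfect sensing, if q_b satisfies λ_p / (𝒫_D r_{p,max} + (1−𝒫_D) r_p0) ≤ q_b ≤ min{ λ_p / (𝒫_D r_p0), 1 }, then there exist nonnegative conditional probabilities q(s,i|b), q(s,i|e) with Σ_{s,i} q(s,i|b) = 1 and Σ_{s,i} q(s,i|e) = 1 satisfying the rate-balance equation q_b 𝒫_D Σ_{s,i} r_p(s,i) q(s,i|b) + q_b (1−𝒫_D) r_p0 Σ_s q(s,0|e) = λ_p; such a witness is a convex combination α q¹ + (1−α) q² of the extreme choices q¹ (all busy-mass on a zero-power control, all idle-mass on positive-power controls) and q² (all busy-mass on an index (s*,i*) maximizing r_p, all idle-mass on zero-power controls). -/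
open Finset

open Classical in
/-- Point mass at the control `(t, j)`. -/
noncomputable def pointMass {S : Type*} {I : S → ℕ} (t : S) (j : Fin (I t + 1)) :
    (s : S) → Fin (I s + 1) → ℝ :=
  fun s i => if (⟨s, i⟩ : (s : S) × Fin (I s + 1)) = ⟨t, j⟩ then 1 else 0

theorem pointMass_nonneg {S : Type*} {I : S → ℕ} (t : S) (j : Fin (I t + 1))
    (s : S) (i : Fin (I s + 1)) : 0 ≤ pointMass t j s i := by
  unfold pointMass
  split_ifs <;> norm_num

theorem sum_mul_pointMass {S : Type*} [Fintype S] {I : S → ℕ} (t : S) (j : Fin (I t + 1))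
    (f : (s : S) → Fin (I s + 1) → ℝ) :
    ∑ s, ∑ i, f s i * pointMass t j s i = f t j := by
  classical
  have h := Fintype.sum_sigma (fun x : (s : S) × Fin (I s + 1) =>
    f x.1 x.2 * pointMass t j x.1 x.2)
  rw [← h, Finset.sum_eq_single (⟨t, j⟩ : (s : S) × Fin (I s + 1))]
  · simp [pointMass]
  · rintro ⟨s, i⟩ _ hne
    simp only [pointMass, if_neg hne, mul_zero]
  · simp

theorem sum_mul_mix {S : Type*} [Fintype S] {I : S → ℕ} (a : ℝ) (t u : S)
    (j : Fin (I t + 1)) (k : Fin (I u + 1)) (f : (s : S) → Fin (I s + 1) → ℝ) :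
    ∑ s, ∑ i, f s i * (a * pointMass t j s i + (1 - a) * pointMass u k s i)
      = a * f t j + (1 - a) * f u k := by
  rw [← sum_mul_pointMass t j f, ← sum_mul_pointMass u k f]
  simp only [Finset.mul_sum, ← Finset.sum_add_distrib]
  refine Finset.sum_congr rfl fun s _ => Finset.sum_congr rfl fun i _ => ?_
  ring

/-- **Proposition 2, sufficiency.** Under imperfect sensing, any `q_b` in the
stated interval admits conditional probabilities satisfying the rate-balance
equation. -/
theorem imperfect_sensing_qb_realizable
    {S : Type*} [Fintype S] [Nonempty S]
    (I : S → ℕ) (hI : ∀ s, 1 ≤ I s)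
    (rp : (s : S) → Fin (I s + 1) → ℝ) (rp0 : ℝ)
    (hrp : ∀ s i, rp s i ∈ Set.Icc (0:ℝ) 1) (hrp00 : ∀ s, rp s 0 = rp0)
    (hrp0pos : 0 < rp0) (hrp0le : rp0 ≤ 1)
    (hmono : ∀ s, Monotone (rp s))
    (lam : ℝ) (hlam : 0 ≤ lam)
    (PD : ℝ) (hPDpos : 0 < PD) (hPDle : PD ≤ 1)
    (rpmax : ℝ) (hrpmax : IsGreatest {v | ∃ s i, v = rp s i} rpmax)
    (qb : ℝ)
    (hlow : lam / (PD * rpmax + (1 - PD) * rp0) ≤ qb)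
    (hhigh : qb ≤ min (lam / (PD * rp0)) 1) :
    ∃ qB qE : (s : S) → Fin (I s + 1) → ℝ,
      (∀ s i, 0 ≤ qB s i) ∧ (∀ s i, 0 ≤ qE s i) ∧
      (∑ s, ∑ i, qB s i) = 1 ∧ (∑ s, ∑ i, qE s i) = 1 ∧
      qb * PD * (∑ s, ∑ i, rp s i * qB s i)
        + qb * (1 - PD) * rp0 * (∑ s, qE s 0) = lam := by
  obtain ⟨⟨t, j, htj⟩, hub⟩ := hrpmax
  obtain ⟨s0⟩ := ‹Nonempty S›
  have hmax : rp0 ≤ rpmax := hub ⟨s0, 0, (hrp00 s0).symm⟩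
  have hden : 0 < PD * rpmax + (1 - PD) * rp0 := by
    have h1 : 0 < PD * rpmax := mul_pos hPDpos (by linarith)
    have h2 : 0 ≤ (1 - PD) * rp0 := mul_nonneg (by linarith) hrp0pos.le
    linarith
  have hb := (div_le_iff₀ hden).1 hlow
  have ha := (le_div_iff₀ (mul_pos hPDpos hrp0pos)).1 (hhigh.trans (min_le_left _ _))
  obtain ⟨a, ha0, ha1, hmix⟩ : ∃ a : ℝ, 0 ≤ a ∧ a ≤ 1 ∧
      a * (qb * (PD * rp0)) + (1 - a) * (qb * (PD * rpmax + (1 - PD) * rp0)) = lam := by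
    rcases (ha.trans hb).eq_or_lt with h | h
    · exact ⟨0, le_rfl, zero_le_one, by linarith⟩
    · have hd := sub_pos.2 h
      refine ⟨(qb * (PD * rpmax + (1 - PD) * rp0) - lam) /
        (qb * (PD * rpmax + (1 - PD) * rp0) - qb * (PD * rp0)),
        div_nonneg (by linarith) hd.le, (div_le_one hd).2 (by linarith), ?_⟩
      have := div_mul_cancel₀ (qb * (PD * rpmax + (1 - PD) * rp0) - lam) hd.ne'
      linarith
  have hone : (Fin.last (I s0)) ≠ 0 := by
    intro h
    have := congrArg Fin.val h
    have h1 := hI s0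
    simp at this
    omega
  refine ⟨fun s i => a * pointMass s0 0 s i + (1 - a) * pointMass t j s i,
    fun s i => a * pointMass s0 (Fin.last (I s0)) s i + (1 - a) * pointMass s0 0 s i,
    fun s i => ?_, fun s i => ?_, ?_, ?_, ?_⟩
  · exact add_nonneg (mul_nonneg ha0 (pointMass_nonneg _ _ _ _))
      (mul_nonneg (by linarith) (pointMass_nonneg _ _ _ _))
  · exact add_nonneg (mul_nonneg ha0 (pointMass_nonneg _ _ _ _))
      (mul_nonneg (by linarith) (pointMass_nonneg _ _ _ _))
  · have := sum_mul_mix a s0 t 0 j (fun _ _ => 1)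
    simp only [one_mul] at this
    rw [this]; ring
  · have := sum_mul_mix a s0 s0 (Fin.last (I s0)) 0 (fun _ _ => 1)
    simp only [one_mul] at this
    rw [this]; ring
  · have h0 := sum_mul_mix a s0 s0 (Fin.last (I s0)) 0 (fun _ i => if i = 0 then 1 else 0)
    simp only [ite_mul, one_mul, zero_mul, Finset.sum_ite_eq', Finset.sum_ite_eq,
      Finset.mem_univ, if_true, if_neg hone] at h0
    rw [sum_mul_mix a s0 t 0 j rp, h0, hrp00, ← htj, ← hmix]
    ring
end

section
/- With exogenous SU packet arrivals, the throughput regions under the two policy classes coincide: for any SU arrival rates λ_s ≥ 0, the set T_0 := { R ∈ ℝ^S : ∃ r̄ ∈ R̂_0 with 0 ≤ R_s ≤ min(λ_s, r̄_s) for all s } equals the set T_2 := { R ∈ ℝ^S : ∃ r̄ ∈ R_2 with 0 ≤ R_s ≤ min(λ_s, r̄_s) for all s }. -/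
open Finset

/-- With exogenous SU packet arrivals, the throughput regions under the two
policy classes coincide: `T_0 = T_2`. -/
theorem throughput_regions_coincide
    {S : Type*} [Fintype S] [Nonempty S]
    (I : S → ℕ) (hI : ∀ s, 1 ≤ I s)
    (P rs rp : (s : S) → Fin (I s + 1) → ℝ) (rp0 : ℝ)
    (Phat : S → ℝ) (lam : ℝ)
    (hP0 : ∀ s, P s 0 = 0) (hPnn : ∀ s i, 0 ≤ P s i)
    (hrs0 : ∀ s, rs s 0 = 0) (hrs : ∀ s i, rs s i ∈ Set.Icc (0:ℝ) 1)
    (hrp : ∀ s i, rp s i ∈ Set.Icc (0:ℝ) 1) (hrp00 : ∀ s, rp s 0 = rp0)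
    (hrp0 : rp0 ∈ Set.Icc (0:ℝ) 1)
    (hPhat : ∀ s, 0 ≤ Phat s) (hlam : 0 ≤ lam)
    (lamS : S → ℝ) (hlamS : ∀ s, 0 ≤ lamS s) :
    {R : S → ℝ | ∃ rbar ∈ linRegion I P rs rp Phat lam,
        ∀ s, 0 ≤ R s ∧ R s ≤ min (lamS s) (rbar s)} =
    {R : S → ℝ | ∃ rbar ∈ priorityFreeRegion I P rs rp Phat lam,
        ∀ s, 0 ≤ R s ∧ R s ≤ min (lamS s) (rbar s)} := by
  ext R
  simp only [Set.mem_ofPred_eq]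
  constructor
  · rintro ⟨rbar, ⟨qB, qE, hB, hE, h1, h2, h3, h4⟩, hR⟩
    exact ⟨rbar, ⟨qE, qB, hE, hB, h3, h1.ge, h2, h4⟩, hR⟩
  · rintro ⟨rbar, ⟨p0, p1, h0, h1, hsum, hl, hpow, hr⟩, hR⟩
    obtain ⟨a, ha0, ha1, ha⟩ : ∃ a : ℝ, 0 ≤ a ∧ a ≤ 1 ∧
        a * (∑ s, ∑ i, rp s i * p1 s i) = lam := by
      rcases (hlam.trans hl).eq_or_lt with h | h
      · refine ⟨0, le_rfl, zero_le_one, ?_⟩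
        rw [zero_mul]
        linarith
      · exact ⟨lam / _, div_nonneg hlam h.le, (div_le_one h).2 hl, div_mul_cancel₀ _ h.ne'⟩
    refine ⟨fun s => ∑ i, rs s i * (p0 s i + (1 - a) * p1 s i),
      ⟨fun s i => a * p1 s i, fun s i => p0 s i + (1 - a) * p1 s i,
        fun s i => mul_nonneg ha0 (h1 s i),
        fun s i => add_nonneg (h0 s i) (mul_nonneg (by linarith) (h1 s i)), ?_, ?_, ?_,
        fun s => rfl⟩, ?_⟩
    · rw [← ha]
      simp only [Finset.mul_sum]
      exact Finset.sum_congr rfl fun s _ => Finset.sum_congr rfl fun i _ => by ring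
    · intro s
      refine le_of_eq_of_le ?_ (hpow s)
      rw [← Finset.sum_add_distrib, ← Finset.sum_add_distrib]
      exact Finset.sum_congr rfl fun i _ => by ring
    · refine Eq.trans ?_ hsum
      simp only [← Finset.sum_add_distrib]
      exact Finset.sum_congr rfl fun s _ => Finset.sum_congr rfl fun i _ => by ring
    · intro s
      refine ⟨(hR s).1, (hR s).2.trans (min_le_min le_rfl ?_)⟩
      rw [hr s]
      refine Finset.sum_le_sum fun i _ => mul_le_mul_of_nonneg_left ?_ (hrs s i).1
      have := mul_nonneg (sub_nonneg.2 ha1) (h1 s i)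
      linarith
end
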